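/- arXiv:1701.07967 — 5 statements merged into one kernel-verified Lean document; each statement's English description precedes it below -/
import Mathlib

section
/- Fix M > 0, reals c > m, K > 0, θ ∈ (0,1) and j ∈ ℕ. Let E_j be the set of càdlàg x : [0,M] → ℝ such that x(t) ≥ x(t−) for all t ∈ (0,M] and such that, for all but at most j points t ∈ [0,M], either x(t) = 0 or x(t+s) = x(t) − s·(c−m) for all s with |s| small enough (and t+s ∈ [0,M]). Let D_j be the set of x ∈ E_j for which there exists a discontinuity point t of x with x(t−) = θK or x(t) = θK or t ∈ {0, M}. Define the long-intense-period functional L^{θK}(x) = sup{ t − s : 0 ≤ s < t ≤ M, x(u) > θK for all u ∈ (s,t) }, with the convention sup ∅ = 0. Then L^{θK} : D_M → ℝ is continuous, with respect to the Skorohod J1 distance on D_M, at every point x ∈ E_j ∖ D_j; that is, for every x ∈ E_j ∖ D_j and every ε > 0 there exists ζ > 0 such that every càdlàg y : [0,M] → ℝ with d_{J1}(x,y) < ζ satisfies |L^{θK}(y) − L^{θK}(x)| < ε. -/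
open MeasureTheory Filter Set

noncomputable section

/-- Time changes on `[0,M]`: strictly increasing continuous bijections fixing the
endpoints. -/
def TimeChange (M : ℝ) : Set (ℝ → ℝ) :=
  {l | ContinuousOn l (Icc 0 M) ∧ StrictMonoOn l (Icc 0 M) ∧
       l 0 = 0 ∧ l M = M ∧ Set.BijOn l (Icc 0 M) (Icc 0 M)}

/-- The Skorohod J1 distance on `[0,M]`. -/
def dJ1 (M : ℝ) (f g : ℝ → ℝ) : ℝ :=
  sInf ((fun l => max (⨆ t : Icc (0:ℝ) M, |f t - g (l t)|)
                      (⨆ t : Icc (0:ℝ) M, |l t - (t : ℝ)|)) '' TimeChange M)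

/-- càdlàg on `[0,M]`. -/
def Cadlag (M : ℝ) (x : ℝ → ℝ) : Prop :=
  (∀ t ∈ Ico (0:ℝ) M, Tendsto x (nhdsWithin t (Ioi t)) (nhds (x t))) ∧
  (∀ t ∈ Ioc (0:ℝ) M, ∃ L : ℝ, Tendsto x (nhdsWithin t (Iio t)) (nhds L))

/-- The length `L^η(x)` of the longest period during which `x` stays continuously above the
level `η` on `[0,M]` (with `sup ∅ = 0`, the convention of `Real.sSup`). -/
def LIP (M η : ℝ) (x : ℝ → ℝ) : ℝ :=
  sSup {r : ℝ | ∃ s t : ℝ, 0 ≤ s ∧ s < t ∧ t ≤ M ∧ r = t - s ∧ ∀ u ∈ Ioo s t, η < x u}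

/-- `E_j`: càdlàg functions with only upward jumps which, outside of at most `j` points,
are either at `0` or locally decrease at rate `c - m`. -/
def Eset (M c m : ℝ) (j : ℕ) : Set (ℝ → ℝ) :=
  {x | (∃ T : Finset ℝ, T.card ≤ j ∧ ∀ t ∈ Icc (0:ℝ) M, t ∉ T →
          (x t = 0 ∨ ∃ δ > 0, ∀ s : ℝ, |s| < δ → t + s ∈ Icc (0:ℝ) M →
            x (t + s) = x t - s * (c - m))) ∧
       ∀ t ∈ Ioc (0:ℝ) M, Function.leftLim x t ≤ x t}

/-- `D_j`: members of `E_j` having a discontinuity point `t` with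
`x(t-) = θK`, or `x(t) = θK`, or `t ∈ {0, M}`. -/
def Dset (M c m θK : ℝ) (j : ℕ) : Set (ℝ → ℝ) :=
  {x | x ∈ Eset M c m j ∧ ∃ t ∈ Icc (0:ℝ) M, Function.leftLim x t ≠ x t ∧
        (Function.leftLim x t = θK ∨ x t = θK ∨ t = 0 ∨ t = M)}

/-!
A time change moves points by less than `ζ` and transports the values of `x` to those of `y` up to
`ζ`, so J1-closeness sandwiches `LIP M η y` between `LIP M (η + ζ) x - 2 * ζ` and
`LIP M (η - ζ) x + 2 * ζ`. It remains to see that `LIP M · x` is continuous at the level `η`.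

From below: intervals on which `x` exceeds levels increasing to `η` subconverge to an interval on
which `x ≥ η`, and `x > η` there as soon as `η` is not a local minimum value of `x`. From above:
if `x > η` on an open interval and `x` never jumps up from `η`, then the left limits of `x` in the
interval exceed `η` as well, so `x` stays uniformly above `η` on every smaller compact interval.
-/

open scoped Topology

section LongPeriod

variable {M η r : ℝ} {x : ℝ → ℝ}

lemma LIP_nonneg (M η : ℝ) (x : ℝ → ℝ) : 0 ≤ LIP M η x := by
  refine Real.sSup_nonneg ?_
  rintro _ ⟨s, t, -, hst, -, rfl, -⟩
  exact sub_nonneg.2 hst.le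

lemma le_LIP {s t : ℝ} (hs : 0 ≤ s) (ht : t ≤ M) (h : ∀ u ∈ Ioo s t, η < x u) :
    t - s ≤ LIP M η x := by
  rcases le_or_gt t s with hts | hst
  · exact (sub_nonpos.2 hts).trans (LIP_nonneg M η x)
  · refine le_csSup ⟨M, ?_⟩ ⟨s, t, hs, hst, ht, rfl, h⟩
    rintro _ ⟨s, t, hs, -, ht, rfl, -⟩
    linarith

lemma LIP_le (hr : 0 ≤ r)
    (h : ∀ s t, 0 ≤ s → s < t → t ≤ M → (∀ u ∈ Ioo s t, η < x u) → t - s ≤ r) :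
    LIP M η x ≤ r := by
  refine Real.sSup_le ?_ hr
  rintro _ ⟨s, t, hs, hst, ht, rfl, hu⟩
  exact h s t hs hst ht hu

lemma exists_Ioo_of_lt_LIP (hr : 0 ≤ r) (h : r < LIP M η x) :
    ∃ s t, 0 ≤ s ∧ t ≤ M ∧ r < t - s ∧ ∀ u ∈ Ioo s t, η < x u := by
  by_contra! hcon
  refine h.not_ge (LIP_le hr fun s t hs _ ht hu => ?_)
  by_contra! hlt
  obtain ⟨u, hmem, hle⟩ := hcon s t hs ht hlt
  exact (hu u hmem).not_ge hle

lemma antitone_LIP (M : ℝ) (x : ℝ → ℝ) : Antitone fun η => LIP M η x :=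
  fun _ _ hle => LIP_le (LIP_nonneg M _ x) fun _ _ hs _ ht hu =>
    le_LIP hs ht fun u hmem => hle.trans_lt (hu u hmem)

end LongPeriod

section Cadlag

variable {M η : ℝ} {x : ℝ → ℝ}

lemma Cadlag.tendsto_leftLim (hx : Cadlag M x) {t : ℝ} (ht : t ∈ Ioc 0 M) :
    Tendsto x (𝓝[<] t) (𝓝 (Function.leftLim x t)) := by
  obtain ⟨L, hL⟩ := hx.2 t ht
  rwa [leftLim_eq_of_tendsto hL]

lemma Cadlag.exists_mem_nhdsWithin_isBounded_image (hx : Cadlag M x) {t : ℝ}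
    (ht : t ∈ Icc 0 M) : ∃ s ∈ 𝓝[Icc 0 M] t, Bornology.IsBounded (x '' s) := by
  have hleft : ∃ s ∈ 𝓝[Ico 0 t] t, Bornology.IsBounded (x '' s) := by
    rcases ht.1.eq_or_lt with rfl | ht0
    · exact ⟨∅, by simp, by simp⟩
    · exact Metric.exists_isBounded_image_of_tendsto
        ((hx.tendsto_leftLim ⟨ht0, ht.2⟩).mono_left (nhdsWithin_mono t Ico_subset_Iio_self))
  have hright : ContinuousWithinAt x (Icc t M) t := by
    rcases ht.2.eq_or_lt with rfl | htM
    · simpa only [Icc_self] using continuousWithinAt_singleton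
    · exact (continuousWithinAt_Ioi_iff_Ici.1 (hx.1 t ⟨ht.1, htM⟩)).mono Icc_subset_Ici_self
  obtain ⟨s, hs, hs_bdd⟩ := hleft
  obtain ⟨s', hs', hs'_bdd⟩ := Metric.exists_isBounded_image_of_tendsto hright
  refine ⟨s ∪ s', ?_, ?_⟩
  · rw [← Ico_union_Icc_eq_Icc ht.1 ht.2, nhdsWithin_union]
    exact union_mem_sup hs hs'
  · rw [image_union]
    exact hs_bdd.union hs'_bdd

lemma Cadlag.isBounded_image (hx : Cadlag M x) : Bornology.IsBounded (x '' Icc 0 M) :=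
  isCompact_Icc.induction_on (p := fun s => Bornology.IsBounded (x '' s)) (by simp)
    (fun _ _ hst ht => ht.subset (image_mono hst))
    (fun _ _ hs ht => by simpa only [image_union] using hs.union ht)
    fun _ ht => hx.exists_mem_nhdsWithin_isBounded_image ht

lemma Cadlag.exists_gt_eventually_lt (hx : Cadlag M x) {t : ℝ} (ht : t ∈ Ioo 0 M)
    (hval : η < x t) (hleft : η < Function.leftLim x t) :
    ∃ η' > η, ∀ᶠ u in 𝓝 t, η' < x u := by
  obtain ⟨η', hη', hlt⟩ := exists_between (lt_min hval hleft)
  obtain ⟨hltval, hltleft⟩ := lt_min_iff.1 hlt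
  have hIio := (hx.tendsto_leftLim ⟨ht.1, ht.2.le⟩).eventually (lt_mem_nhds hltleft)
  have hIoi := (hx.1 t ⟨ht.1.le, ht.2⟩).eventually (lt_mem_nhds hltval)
  refine ⟨η', hη', ?_⟩
  rw [eventually_nhdsWithin_iff] at hIio hIoi
  filter_upwards [hIio, hIoi] with u hlt_of_lt hlt_of_gt
  rcases lt_trichotomy u t with hu | rfl | hu
  · exact hlt_of_lt hu
  · exact hltval
  · exact hlt_of_gt hu

lemma Cadlag.exists_gt_forall_lt_of_isCompact (hx : Cadlag M x) {k : Set ℝ} (hk : IsCompact k)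
    (hkM : k ⊆ Ioo 0 M) (hval : ∀ t ∈ k, η < x t) (hleft : ∀ t ∈ k, η < Function.leftLim x t) :
    ∃ η' > η, ∀ u ∈ k, η' < x u := by
  refine hk.induction_on (p := fun s => ∃ η' > η, ∀ u ∈ s, η' < x u)
    ⟨η + 1, lt_add_one η, by simp⟩ ?_ ?_ ?_
  · rintro s t hst ⟨η', hη', h⟩
    exact ⟨η', hη', fun u hu => h u (hst hu)⟩
  · rintro s t ⟨η₁, hη₁, h₁⟩ ⟨η₂, hη₂, h₂⟩
    refine ⟨min η₁ η₂, lt_min hη₁ hη₂, fun u hu => ?_⟩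
    exact hu.elim (fun hs => min_lt_of_left_lt (h₁ u hs)) fun ht => min_lt_of_right_lt (h₂ u ht)
  · intro t ht
    obtain ⟨η', hη', h⟩ := hx.exists_gt_eventually_lt (hkM ht) (hval t ht) (hleft t ht)
    exact ⟨{u | η' < x u}, mem_nhdsWithin_of_mem_nhds h, η', hη', fun _ hu => hu⟩

end Cadlag

section Level

variable {M η r : ℝ} {x : ℝ → ℝ}

lemma exists_Ioo_le_of_forall_lt_LIP (hr : 0 ≤ r) (h : ∀ η' < η, r < LIP M η' x) :
    ∃ a b, 0 ≤ a ∧ b ≤ M ∧ r ≤ b - a ∧ ∀ u ∈ Ioo a b, η ≤ x u := by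
  obtain ⟨level, -, hlevel_lt, hlevel⟩ := exists_seq_strictMono_tendsto η
  choose a b ha hb hlen hgt using fun n => exists_Ioo_of_lt_LIP hr (h _ (hlevel_lt n))
  have hmem (n : ℕ) : (a n, b n) ∈ Icc 0 M ×ˢ Icc 0 M := by
    constructor <;> constructor <;> linarith [ha n, hb n, hlen n]
  obtain ⟨⟨A, B⟩, ⟨hAmem, hBmem⟩, φ, hφ, hlim⟩ :=
    (isCompact_Icc.prod isCompact_Icc).tendsto_subseq hmem
  obtain ⟨hA, hB⟩ := Prod.tendsto_iff _ _ |>.1 hlim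
  refine ⟨A, B, hAmem.1, hBmem.2, ?_, fun u hu => ?_⟩
  · exact ge_of_tendsto' (hB.sub hA) fun n => (hlen (φ n)).le
  · refine le_of_tendsto (hlevel.comp hφ.tendsto_atTop) ?_
    filter_upwards [hA.eventually_lt_const hu.1, hB.eventually_const_lt hu.2] with n hAu hBu
    exact (hgt (φ n) u ⟨hAu, hBu⟩).le

lemma exists_lt_LIP_lt (hmin : ∀ t ∈ Ioo 0 M, IsLocalMin x t → x t ≠ η) (h : LIP M η x < r) :
    ∃ η' < η, LIP M η' x < r := by
  by_contra! hcon
  obtain ⟨r', hr', hr'r⟩ := exists_between h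
  obtain ⟨a, b, ha, hb, hlen, hge⟩ := exists_Ioo_le_of_forall_lt_LIP
    ((LIP_nonneg M η x).trans hr'.le) fun η' hη' => hr'r.trans_le (hcon η' hη')
  have hgt (u : ℝ) (hu : u ∈ Ioo a b) : η < x u := by
    refine (hge u hu).lt_of_ne' fun heq => ?_
    refine hmin u ⟨ha.trans_lt hu.1, hu.2.trans_le hb⟩ ?_ heq
    filter_upwards [Ioo_mem_nhds hu.1 hu.2] with v hv
    exact heq.trans_le (hge v hv)
  linarith [le_LIP ha hb hgt]

lemma Cadlag.lt_leftLim_of_forall_lt (hx : Cadlag M x)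
    (hjump : ∀ t ∈ Ioo 0 M, Function.leftLim x t = η → x t ≤ η) {a b t : ℝ} (ha : 0 ≤ a)
    (hb : b ≤ M) (h : ∀ u ∈ Ioo a b, η < x u) (ht : t ∈ Ioo a b) :
    η < Function.leftLim x t := by
  have htM : t ∈ Ioo 0 M := ⟨ha.trans_lt ht.1, ht.2.trans_le hb⟩
  have hle : η ≤ Function.leftLim x t := by
    refine ge_of_tendsto (hx.tendsto_leftLim ⟨htM.1, htM.2.le⟩) ?_
    filter_upwards [Ioo_mem_nhdsLT ht.1] with u hu
    exact (h u ⟨hu.1, hu.2.trans ht.2⟩).le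
  exact hle.lt_of_ne' fun heq => (hjump t htM heq).not_gt (h t ht)

lemma Cadlag.exists_gt_lt_LIP (hx : Cadlag M x)
    (hjump : ∀ t ∈ Ioo 0 M, Function.leftLim x t = η → x t ≤ η) (h : r < LIP M η x) :
    ∃ η' > η, r < LIP M η' x := by
  rcases lt_or_ge r 0 with hr | hr
  · exact ⟨η + 1, lt_add_one η, hr.trans_le (LIP_nonneg M (η + 1) x)⟩
  obtain ⟨a, b, ha, hb, hlen, hgt⟩ := exists_Ioo_of_lt_LIP hr h
  obtain ⟨d, hd, hdlen⟩ : ∃ d > 0, r < (b - d) - (a + d) :=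
    ⟨(b - a - r) / 4, by linarith, by linarith⟩
  have hsub : Icc (a + d) (b - d) ⊆ Ioo a b := Icc_subset_Ioo (by linarith) (by linarith)
  obtain ⟨η', hη', hη'x⟩ := hx.exists_gt_forall_lt_of_isCompact isCompact_Icc
    (hsub.trans (Ioo_subset_Ioo ha hb)) (fun t ht => hgt t (hsub ht))
    fun t ht => hx.lt_leftLim_of_forall_lt hjump ha hb hgt (hsub ht)
  refine ⟨η', hη', hdlen.trans_le (le_LIP (by linarith) (by linarith) fun u hu => ?_)⟩
  exact hη'x u (Ioo_subset_Icc_self hu)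

lemma Cadlag.continuousAt_LIP_level (hx : Cadlag M x)
    (hmin : ∀ t ∈ Ioo 0 M, IsLocalMin x t → x t ≠ η)
    (hjump : ∀ t ∈ Ioo 0 M, Function.leftLim x t = η → x t ≤ η) :
    ContinuousAt (fun η => LIP M η x) η := by
  refine tendsto_order.2 ⟨fun r hr => ?_, fun r hr => ?_⟩
  · obtain ⟨η', hη', hlt⟩ := hx.exists_gt_lt_LIP hjump hr
    filter_upwards [Iio_mem_nhds hη'] with u hu
    exact hlt.trans_le (antitone_LIP M x hu.le)
  · obtain ⟨η', hη', hlt⟩ := exists_lt_LIP_lt hmin hr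
    filter_upwards [Ioi_mem_nhds hη'] with u hu
    exact (antitone_LIP M x hu.le).trans_lt hlt

end Level

section J1Close

variable {M ζ η : ℝ} {x y : ℝ → ℝ}

/-- `x` and `y` are within `ζ` of each other after a time change which moves points by less than
`ζ`. Time changes are encoded as order automorphisms of `[0, M]`, so that they can be inverted;
continuity and the values at the endpoints are automatic. -/
def J1Close (M ζ : ℝ) (x y : ℝ → ℝ) : Prop :=
  ∃ e : Icc (0 : ℝ) M ≃o Icc (0 : ℝ) M,
    ∀ t : Icc (0 : ℝ) M, |x t - y (e t)| < ζ ∧ |(e t : ℝ) - t| < ζ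

lemma J1Close.symm (h : J1Close M ζ x y) : J1Close M ζ y x := by
  obtain ⟨e, he⟩ := h
  refine ⟨e.symm, fun t => ?_⟩
  obtain ⟨hval, htime⟩ := he (e.symm t)
  rw [e.apply_symm_apply] at hval htime
  exact ⟨by rwa [abs_sub_comm], by rwa [abs_sub_comm]⟩

lemma exists_orderIso_of_mem_timeChange {l : ℝ → ℝ} (hl : l ∈ TimeChange M) :
    ∃ e : Icc (0 : ℝ) M ≃o Icc (0 : ℝ) M, ∀ t, (e t : ℝ) = l t := by
  obtain ⟨-, hmono, -, -, hbij⟩ := hl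
  have hrestrict : StrictMono (hbij.mapsTo.restrict l _ _) := fun s t hst => hmono s.2 t.2 hst
  exact ⟨hrestrict.orderIsoOfSurjective _ (hbij.mapsTo.restrict_surjective_iff.2 hbij.surjOn),
    fun _ => rfl⟩

lemma J1Close.of_dJ1_lt (hx : Cadlag M x) (hy : Cadlag M y) (h : dJ1 M x y < ζ) :
    J1Close M ζ x y := by
  have hne : (TimeChange M).Nonempty :=
    ⟨id, continuousOn_id, strictMonoOn_id, rfl, rfl, bijOn_id _⟩
  obtain ⟨_, ⟨l, hl, rfl⟩, hlt⟩ := exists_lt_of_csInf_lt (hne.image _) h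
  obtain ⟨hval, htime⟩ := max_lt_iff.1 hlt
  obtain ⟨e, he⟩ := exists_orderIso_of_mem_timeChange hl
  simp only [← he] at hval htime
  obtain ⟨C, hC⟩ := hx.isBounded_image.exists_norm_le
  obtain ⟨D, hD⟩ := hy.isBounded_image.exists_norm_le
  have hval_bdd : BddAbove (range fun t : Icc (0 : ℝ) M => |x t - y (e t)|) := by
    refine ⟨C + D, forall_mem_range.2 fun t => (abs_sub _ _).trans ?_⟩
    exact add_le_add (hC _ (mem_image_of_mem x t.2)) (hD _ (mem_image_of_mem y (e t).2))
  have htime_bdd : BddAbove (range fun t : Icc (0 : ℝ) M => |(e t : ℝ) - t|) := by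
    refine ⟨M - 0, forall_mem_range.2 fun t => ?_⟩
    exact abs_sub_le_of_le_of_le (e t).2.1 (e t).2.2 t.2.1 t.2.2
  exact ⟨e, fun t => ⟨(le_ciSup hval_bdd t).trans_lt hval, (le_ciSup htime_bdd t).trans_lt htime⟩⟩

lemma J1Close.LIP_add_le (hζ : 0 ≤ ζ) (h : J1Close M ζ x y) :
    LIP M (η + ζ) x ≤ LIP M η y + 2 * ζ := by
  obtain ⟨e, he⟩ := h
  refine LIP_le (by linarith [LIP_nonneg M η y]) fun s t hs hst ht hgt => ?_
  lift s to Icc (0 : ℝ) M using ⟨hs, hst.le.trans ht⟩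
  lift t to Icc (0 : ℝ) M using ⟨hs.trans hst.le, ht⟩
  have himage (v : ℝ) (hv : v ∈ Ioo (e s : ℝ) (e t)) : η < y v := by
    lift v to Icc (0 : ℝ) M using ⟨(e s).2.1.trans hv.1.le, hv.2.le.trans (e t).2.2⟩
    obtain ⟨u, rfl⟩ := e.surjective v
    have hu := hgt u ⟨e.lt_iff_lt.1 hv.1, e.lt_iff_lt.1 hv.2⟩
    linarith [(abs_lt.1 (he u).1).2]
  have hlen := le_LIP (e s).2.1 (e t).2.2 himage
  linarith [(abs_lt.1 (he s).2).2, (abs_lt.1 (he t).2).1]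

end J1Close

section Eset

variable {M c m η : ℝ} {j : ℕ} {x : ℝ → ℝ}

lemma eventually_nhdsGT_lt_of_deriv_neg {t : ℝ} (hcont : ContinuousWithinAt x (Ici t) t)
    (hderiv : ∀ᶠ v in 𝓝[>] t, deriv x v < 0) : ∀ᶠ v in 𝓝[>] t, x v < x t := by
  obtain ⟨w, htw, hw⟩ := mem_nhdsGT_iff_exists_Ioo_subset.1 hderiv
  have hcontOn : ContinuousOn x (Ico t w) := by
    intro v hv
    rcases hv.1.eq_or_lt with rfl | htv
    · exact hcont.mono Ico_subset_Ici_self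
    · exact (differentiableAt_of_deriv_ne_zero (hw ⟨htv, hv.2⟩).ne).continuousAt.continuousWithinAt
  have hanti : StrictAntiOn x (Ico t w) :=
    strictAntiOn_of_deriv_neg (convex_Ico t w) hcontOn (by rwa [interior_Ico])
  filter_upwards [Ioo_mem_nhdsGT htw] with v hv
  exact hanti ⟨le_rfl, htw⟩ ⟨hv.1.le, hv.2⟩ hv.1

lemma hasDerivAt_of_locally_affine {k δ t : ℝ} {U : Set ℝ} (hU : U ∈ 𝓝 t) (hδ : 0 < δ)
    (h : ∀ s, |s| < δ → t + s ∈ U → x (t + s) = x t - s * k) :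
    HasDerivAt x (-k) t := by
  have haffine : HasDerivAt (fun v => x t - (v - t) * k) (-k) t := by
    simpa using (((hasDerivAt_id t).sub_const t).mul_const k).const_sub (x t)
  refine haffine.congr_of_eventuallyEq ?_
  filter_upwards [Metric.ball_mem_nhds t hδ, hU] with v hvδ hvU
  simpa using h (v - t) hvδ (by simpa using hvU)

lemma eventually_nhdsGT_lt_of_mem_Eset (hcm : m < c) (hx : Cadlag M x) (hxE : x ∈ Eset M c m j)
    {t : ℝ} (ht : t ∈ Ico 0 M) (hpos : 0 < x t) : ∀ᶠ v in 𝓝[>] t, x v < x t := by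
  obtain ⟨⟨T, -, hT⟩, -⟩ := hxE
  have hnotMem : ∀ᶠ v in 𝓝[>] t, v ∉ T :=
    ((nhdsGT_le_nhdsNE t).trans (nhdsNE_le_cofinite t)) T.finite_toSet.compl_mem_cofinite
  refine eventually_nhdsGT_lt_of_deriv_neg (continuousWithinAt_Ioi_iff_Ici.1 (hx.1 t ht)) ?_
  filter_upwards [hnotMem, (hx.1 t ht).eventually (lt_mem_nhds hpos), Ioo_mem_nhdsGT ht.2]
    with v hvT hvpos hv
  have hvM : v ∈ Ioo 0 M := ⟨ht.1.trans_lt hv.1, hv.2⟩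
  obtain hzero | ⟨δ, hδ, haffine⟩ := hT v (Ioo_subset_Icc_self hvM) hvT
  · exact absurd hzero hvpos.ne'
  · rw [(hasDerivAt_of_locally_affine (Icc_mem_nhds hvM.1 hvM.2) hδ haffine).deriv]
    linarith

lemma not_isLocalMin_of_mem_Eset (hcm : m < c) (hx : Cadlag M x) (hxE : x ∈ Eset M c m j)
    {t : ℝ} (ht : t ∈ Ico 0 M) (hpos : 0 < x t) : ¬ IsLocalMin x t := by
  intro hmin
  obtain ⟨v, hlt, hle⟩ := ((eventually_nhdsGT_lt_of_mem_Eset hcm hx hxE ht hpos).and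
    (hmin.filter_mono nhdsWithin_le_nhds)).exists
  exact hlt.not_ge hle

lemma eq_of_leftLim_eq_of_notMem_Dset (hxE : x ∈ Eset M c m j) (hxD : x ∉ Dset M c m η j)
    {t : ℝ} (ht : t ∈ Icc 0 M) (h : Function.leftLim x t = η) : x t = η := by
  by_contra hne
  exact hxD ⟨hxE, t, ht, h ▸ Ne.symm hne, Or.inl h⟩

end Eset

theorem LIP_continuousAt_general {M η : ℝ} {x : ℝ → ℝ} (hx : Cadlag M x)
    (hmin : ∀ t ∈ Ioo 0 M, IsLocalMin x t → x t ≠ η)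
    (hjump : ∀ t ∈ Ioo 0 M, Function.leftLim x t = η → x t ≤ η) :
    ∀ ε > 0, ∃ ζ > 0, ∀ y : ℝ → ℝ, Cadlag M y → dJ1 M x y < ζ →
      |LIP M η y - LIP M η x| < ε := by
  intro ε hε
  obtain ⟨δ, hδ, hlevel⟩ :=
    Metric.continuousAt_iff.1 (hx.continuousAt_LIP_level hmin hjump) (ε / 2) (half_pos hε)
  obtain ⟨ζ, hζ, hζlt⟩ := exists_between (lt_min hδ (show 0 < ε / 4 by linarith))
  obtain ⟨hζδ, hζε⟩ := lt_min_iff.1 hζlt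
  refine ⟨ζ, hζ, fun y hy hxy => ?_⟩
  have hclose := J1Close.of_dJ1_lt hx hy hxy
  have hlower : LIP M (η + ζ) x ≤ LIP M η y + 2 * ζ := hclose.LIP_add_le hζ.le
  have hupper : LIP M η y ≤ LIP M (η - ζ) x + 2 * ζ := by
    simpa only [sub_add_cancel] using hclose.symm.LIP_add_le (η := η - ζ) hζ.le
  have habove := hlevel (x := η + ζ) (by simpa [Real.dist_eq, abs_of_pos hζ] using hζδ)
  have hbelow := hlevel (x := η - ζ) (by simpa [Real.dist_eq, abs_of_pos hζ] using hζδ)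
  rw [Real.dist_eq, abs_lt] at habove hbelow
  exact abs_lt.2 ⟨by linarith, by linarith⟩

/-- **Continuity of the long-intense-period functional** `L^{θK}` at every càdlàg
`x ∈ E_j ∖ D_j`, with respect to the Skorohod J1 distance on `[0,M]`. -/
theorem LIP_continuousAt (M c m K θ : ℝ) (hM : 0 < M) (hcm : m < c)
    (hK : 0 < K) (hθ : θ ∈ Ioo (0:ℝ) 1) (j : ℕ)
    (x : ℝ → ℝ) (hx : Cadlag M x)
    (hxE : x ∈ Eset M c m j) (hxD : x ∉ Dset M c m (θ * K) j) :
    ∀ ε > 0, ∃ ζ > 0, ∀ y : ℝ → ℝ, Cadlag M y → dJ1 M x y < ζ →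
      |LIP M (θ * K) y - LIP M (θ * K) x| < ε := by
  exact LIP_continuousAt_general hx
    (fun t ht hmin heq => not_isLocalMin_of_mem_Eset hcm hx hxE (Ioo_subset_Ico_self ht)
      (heq ▸ mul_pos hθ.1 hK) hmin)
    fun t ht h => (eq_of_leftLim_eq_of_notMem_Dset hxE hxD (Ioo_subset_Icc_self ht) h).le

end
end

section
/- Let S be a separable complete normed additive commutative group (so the metric d(x,y) = ‖x−y‖ is translation invariant), and let C ⊆ S be closed. Let (μ_n)_{n≥1} be finite Borel measures on S and let μ_0 be a Borel measure on S∖C that is finite on all Borel sets bounded away from C. Suppose μ_n → μ_0 in M_O, i.e., limsup_{n→∞} μ_n(F) ≤ μ_0(F) for every closed F ⊆ S bounded away from C and liminf_{n→∞} μ_n(G) ≥ μ_0(G) for every open G ⊆ S bounded away from C. Let (y_n)_{n≥1} ⊆ S with y_n → 0, and define the shifted measures by (μ_n ∘ s_{y_n})(A) = μ_n(A − y_n) for Borel A, where A − y = { a − y : a ∈ A }. Then μ_n ∘ s_{y_n} → μ_0 in M_O, i.e., limsup_{n→∞} μ_n(F − y_n) ≤ μ_0(F) for every closed F bounded away from C,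 and liminf_{n→∞} μ_n(G − y_n) ≥ μ_0(G) for every open G bounded away from C. -/
open MeasureTheory Filter Set

noncomputable section

/-- `A` is bounded away from `C`. -/
def BoundedAwayFrom {S : Type*} [PseudoMetricSpace S] (A C : Set S) : Prop :=
  ∃ ε > 0, ∀ a ∈ A, ∀ c ∈ C, ε ≤ dist a c

/-!
Since `y_n → 0`, the translations `x ↦ x + y_n` converge uniformly to the identity. Hence, for
every `δ > 0` and all large `n`, the set `F - y_n` lies in the closed `δ`-thickening of `F`, while
`G - y_n` contains the points at distance more than `δ` from `Gᶜ`. Applying the assumed convergence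
to these two sets and letting `δ → 0`, continuity of `μ_0` from above, respectively from below,
gives the two bounds.
-/

open Metric
open scoped Topology ENNReal

namespace BoundedAwayFrom

variable {S : Type*} [PseudoMetricSpace S] {A B C : Set S}

theorem mono (hB : BoundedAwayFrom B C) (hAB : A ⊆ B) : BoundedAwayFrom A C :=
  let ⟨ε, hε, hdist⟩ := hB
  ⟨ε, hε, fun a ha => hdist a (hAB ha)⟩

theorem exists_thickening (hA : BoundedAwayFrom A C) :
    ∃ r > 0, BoundedAwayFrom (thickening r A) C := by
  obtain ⟨ε, hε, hdist⟩ := hA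
  refine ⟨ε / 2, half_pos hε, ε / 2, half_pos hε, fun x hx c hc => ?_⟩
  obtain ⟨a, ha, hxa⟩ := mem_thickening_iff.1 hx
  linarith [hdist a ha c hc, dist_triangle_left a c x]

theorem eventually_cthickening (hA : BoundedAwayFrom A C) :
    ∀ᶠ δ in 𝓝[>] (0 : ℝ), BoundedAwayFrom (cthickening δ A) C := by
  obtain ⟨r, hr, hAr⟩ := hA.exists_thickening
  filter_upwards [Ioo_mem_nhdsGT hr] with δ hδ
  exact hAr.mono (cthickening_subset_thickening' hr hδ.2 A)

end BoundedAwayFrom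

section UniformPerturbation

variable {S ι : Type*} [PseudoEMetricSpace S] {l : Filter ι} {f : ι → S → S}

theorem eventually_preimage_subset_cthickening (hf : TendstoUniformly f id l) {δ : ℝ}
    (hδ : 0 < δ) (A : Set S) : ∀ᶠ n in l, f n ⁻¹' A ⊆ cthickening δ A := by
  filter_upwards [EMetric.tendstoUniformly_iff.1 hf _ (ENNReal.ofReal_pos.2 hδ)] with n hn x hx
  exact mem_cthickening_of_edist_le x (f n x) δ A hx (hn x).le

theorem iUnion_compl_cthickening_compl {G : Set S} (hG : IsOpen G) :
    ⋃ δ : Ioi (0 : ℝ), (cthickening δ Gᶜ)ᶜ = G := by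
  have hcompl : Gᶜ = ⋂ δ > (0 : ℝ), cthickening δ Gᶜ :=
    hG.isClosed_compl.closure_eq.symm.trans (closure_eq_iInter_cthickening Gᶜ)
  rw [← compl_iInter, compl_eq_comm]
  exact hcompl.trans (biInter_eq_iInter _ _)

variable [MeasurableSpace S]

theorem tendsto_measure_compl_cthickening_compl (ν : Measure S) {G : Set S} (hG : IsOpen G) :
    Tendsto (fun δ => ν (cthickening δ Gᶜ)ᶜ) (𝓝[>] 0) (𝓝 (ν G)) := by
  have hanti : Antitone fun δ : Ioi (0 : ℝ) => (cthickening δ Gᶜ)ᶜ :=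
    fun _ _ hle => compl_subset_compl.2 (cthickening_mono hle _)
  have : (atBot : Filter (Ioi (0 : ℝ))).IsCountablyGenerated := by
    rw [← comap_coe_Ioi_nhdsGT]
    infer_instance
  rw [← tendsto_comp_coe_Ioi_atBot]
  simpa only [iUnion_compl_cthickening_compl hG, Function.comp_def] using
    tendsto_measure_iUnion_atBot (μ := ν) hanti

variable {μ : ι → Measure S} {ν : Measure S}

theorem limsup_measure_preimage_le_of_tendstoUniformly [OpensMeasurableSpace S]
    (hf : TendstoUniformly f id l) {F : Set S} (hF : IsClosed F)
    (hfinite : ∃ r > 0, ν (cthickening r F) ≠ ∞)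
    (hupper : ∀ᶠ δ in 𝓝[>] (0 : ℝ),
      limsup (fun n => μ n (cthickening δ F)) l ≤ ν (cthickening δ F)) :
    limsup (fun n => μ n (f n ⁻¹' F)) l ≤ ν F := by
  have hlim : Tendsto (fun δ => ν (cthickening δ F)) (𝓝[>] 0) (𝓝 (ν F)) :=
    (tendsto_measure_cthickening_of_isClosed hfinite hF).mono_left nhdsWithin_le_nhds
  refine ge_of_tendsto hlim ?_
  filter_upwards [hupper, self_mem_nhdsWithin] with δ hδ hδ_pos
  calc limsup (fun n => μ n (f n ⁻¹' F)) l
      ≤ limsup (fun n => μ n (cthickening δ F)) l :=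
        limsup_le_limsup <| (eventually_preimage_subset_cthickening hf hδ_pos F).mono
          fun _ hn => measure_mono hn
    _ ≤ ν (cthickening δ F) := hδ

theorem le_liminf_measure_preimage_of_tendstoUniformly
    (hf : TendstoUniformly f id l) {G : Set S} (hG : IsOpen G)
    (hlower : ∀ᶠ δ in 𝓝[>] (0 : ℝ),
      ν (cthickening δ Gᶜ)ᶜ ≤ liminf (fun n => μ n (cthickening δ Gᶜ)ᶜ) l) :
    ν G ≤ liminf (fun n => μ n (f n ⁻¹' G)) l := by
  refine le_of_tendsto (tendsto_measure_compl_cthickening_compl ν hG) ?_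
  filter_upwards [hlower, self_mem_nhdsWithin] with δ hδ hδ_pos
  calc ν (cthickening δ Gᶜ)ᶜ
      ≤ liminf (fun n => μ n (cthickening δ Gᶜ)ᶜ) l := hδ
    _ ≤ liminf (fun n => μ n (f n ⁻¹' G)) l :=
        liminf_le_liminf <| (eventually_preimage_subset_cthickening hf hδ_pos Gᶜ).mono
          fun _ hn => measure_mono (compl_subset_comm.1 hn)

end UniformPerturbation

theorem tendstoUniformly_add_right_id {S ι : Type*} [AddZeroClass S] [PseudoMetricSpace S]
    [IsIsometricVAdd S S] {l : Filter ι} {y : ι → S} (hy : Tendsto y l (𝓝 0)) :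
    TendstoUniformly (fun n x => x + y n) id l := by
  refine Metric.tendstoUniformly_iff.2 fun ε hε => ?_
  filter_upwards [Metric.tendsto_nhds.1 hy ε hε] with n hn x
  calc dist x (x + y n) = dist (x + 0) (x + y n) := by rw [add_zero]
    _ = dist (y n) 0 := by rw [dist_add_left, dist_comm]
    _ < ε := hn

theorem MO_convergence_shift_general {S ι : Type*} [AddGroup S] [PseudoMetricSpace S]
    [IsIsometricVAdd S S] [MeasurableSpace S] [OpensMeasurableSpace S]
    (C : Set S) {l : Filter ι} (μ : ι → Measure S) (μ0 : Measure S)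
    (hμ0 : ∀ A : Set S, MeasurableSet A → BoundedAwayFrom A C → μ0 A ≠ ⊤)
    (hupper : ∀ F : Set S, IsClosed F → BoundedAwayFrom F C →
      limsup (fun n => μ n F) l ≤ μ0 F)
    (hlower : ∀ G : Set S, IsOpen G → BoundedAwayFrom G C →
      μ0 G ≤ liminf (fun n => μ n G) l)
    (y : ι → S) (hy : Tendsto y l (𝓝 0)) :
    (∀ F : Set S, IsClosed F → BoundedAwayFrom F C →
      limsup (fun n => μ n ((fun a => a - y n) '' F)) l ≤ μ0 F) ∧
    (∀ G : Set S, IsOpen G → BoundedAwayFrom G C →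
      μ0 G ≤ liminf (fun n => μ n ((fun a => a - y n) '' G)) l) := by
  have hshift := tendstoUniformly_add_right_id hy
  simp only [sub_eq_add_neg, image_add_right']
  refine ⟨fun F hF hFC => ?_, fun G hG hGC => ?_⟩
  · obtain ⟨r, hr, hr_pos⟩ := (hFC.eventually_cthickening.and self_mem_nhdsWithin).exists
    exact limsup_measure_preimage_le_of_tendstoUniformly hshift hF
      ⟨r, hr_pos, hμ0 _ isClosed_cthickening.measurableSet hr⟩
      (hFC.eventually_cthickening.mono fun _ hδ => hupper _ isClosed_cthickening hδ)
  · have hinner (δ : ℝ) : (cthickening δ Gᶜ)ᶜ ⊆ G :=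
      compl_subset_comm.1 (self_subset_cthickening Gᶜ)
    exact le_liminf_measure_preimage_of_tendstoUniformly hshift hG <| .of_forall fun δ =>
      hlower _ isClosed_cthickening.isOpen_compl (hGC.mono (hinner δ))

/-- **Shifting by a vanishing sequence preserves M_O-convergence.**
If finite Borel measures `μ_n` converge to `μ_0` in `M_O` (relative to a closed set `C`) on a
separable complete normed additive commutative group, and `y_n → 0`, then the shifted
measures `A ↦ μ_n(A − y_n)` also converge to `μ_0` in `M_O`. -/
theorem MO_convergence_shift {S : Type*} [NormedAddCommGroup S] [CompleteSpace S]
    [TopologicalSpace.SeparableSpace S] [MeasurableSpace S] [BorelSpace S]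
    (C : Set S) (hC : IsClosed C)
    (μ : ℕ → Measure S) (hfin : ∀ n, IsFiniteMeasure (μ n))
    (μ0 : Measure S)
    (hμ0 : ∀ A : Set S, MeasurableSet A → BoundedAwayFrom A C → μ0 A ≠ ⊤)
    (hupper : ∀ F : Set S, IsClosed F → BoundedAwayFrom F C →
      limsup (fun n => μ n F) atTop ≤ μ0 F)
    (hlower : ∀ G : Set S, IsOpen G → BoundedAwayFrom G C →
      μ0 G ≤ liminf (fun n => μ n G) atTop)
    (y : ℕ → S) (hy : Tendsto y atTop (nhds 0)) :
    (∀ F : Set S, IsClosed F → BoundedAwayFrom F C →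
      limsup (fun n => μ n ((fun a => a - y n) '' F)) atTop ≤ μ0 F) ∧
    (∀ G : Set S, IsOpen G → BoundedAwayFrom G C →
      μ0 G ≤ liminf (fun n => μ n ((fun a => a - y n) '' G)) atTop) :=
  MO_convergence_shift_general C μ μ0 hμ0 hupper hlower y hy

end
end

section
/- Let Z be a real random variable regularly varying with index −α (α>0), let (λ_n) be a positive sequence regularly varying with index ρ > 0 with λ_n → ∞, and assume αρ > 1. Fix j ≥ 1. Then for every ε₀ with 0 < ε₀ < (αρ − 1)/((j+1)·α·ρ): lim_{n→∞} [ n·P(|Z| > λ_n) ]^{−j} · C(n, j+1) · P( |Z| > λ_n^{1−ε₀} )^{j+1} = 0, where C(n, j+1) denotes the binomial coefficient n choose j+1. -/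
open MeasureTheory Filter Set

noncomputable section

/-- `Z` is regularly varying with index `-α`: the tail of `|Z|` is positive everywhere and
`P(|Z| > t x) / P(|Z| > t) → x^{-α}` as `t → ∞`, for every `x > 0`. -/
def RegVarRV {Ω : Type*} [MeasurableSpace Ω] (μ : Measure Ω) (Z : Ω → ℝ) (α : ℝ) : Prop :=
  (∀ t : ℝ, 0 < t → 0 < (μ {ω | t < |Z ω|}).toReal) ∧
  ∀ x : ℝ, 0 < x →
    Tendsto (fun t : ℝ => (μ {ω | t * x < |Z ω|}).toReal / (μ {ω | t < |Z ω|}).toReal)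
      atTop (nhds (x ^ (-α)))

/-- A sequence of positive reals is regularly varying with index `ρ`. -/
def RegVarSeq (l : ℕ → ℝ) (ρ : ℝ) : Prop :=
  ∀ c : ℝ, 0 < c → Tendsto (fun n : ℕ => l ⌊c * (n : ℝ)⌋₊ / l n) atTop (nhds (c ^ ρ))

/-!
Sandwich the tail `F t = P(|Z| > t)` between the powers `t ^ (-b)` and `t ^ (-a)` with `a < α < b`,
and bound `λ_n` from below by `n ^ r` with `r < ρ`, all up to constants: each bound follows by
iterating the limit of the ratio `f (2 t) / f t` along the dyadic scale. The quantity to be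
estimated is then `O(n * λ_n ^ (-p))` with `p = (1 - ε₀) * a * (j + 1) - b * j`, hence
`O(n ^ (1 - r * p))`. At `a = b = α`, `r = ρ` the inequality `1 < r * p` is exactly the assumption
on `ε₀`, so it persists for exponents close to these.
-/

open scoped Topology

section PowerBounds

variable {f : ℝ → ℝ} {b β s : ℝ}

lemma le_of_forall_mul_le {γ : Type*} [Preorder γ] {h : ℝ → γ} {T : ℝ} {M : γ} (hb : 1 < b)
    (hT : 0 < T) (hmul : ∀ t, T ≤ t → h (t * b) ≤ h t) (hM : ∀ t ∈ Icc T (T * b), h t ≤ M)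
    {t : ℝ} (ht : T ≤ t) : h t ≤ M := by
  have hb₀ : 0 < b := one_pos.trans hb
  have iterate (k : ℕ) (u : ℝ) (hu : T ≤ u) : h (u * b ^ k) ≤ h u := by
    induction k with
    | zero => simp
    | succ k ih =>
      have hle : T ≤ u * b ^ k :=
        hu.trans (le_mul_of_one_le_right (hT.le.trans hu) (one_le_pow₀ hb.le))
      rw [pow_succ, ← mul_assoc]
      exact (hmul _ hle).trans ih
  obtain ⟨k, hk, hk'⟩ := exists_nat_pow_near ((one_le_div₀ hT).2 ht) hb
  have hbk : 0 < b ^ k := pow_pos hb₀ k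
  have hlower : T ≤ t / b ^ k := by
    rwa [le_div_iff₀ hbk, mul_comm, ← le_div_iff₀ hT]
  have hupper : t / b ^ k ≤ T * b := by
    rw [div_lt_iff₀ hT, pow_succ] at hk'
    rw [div_le_iff₀ hbk]
    linarith
  calc h t = h (t / b ^ k * b ^ k) := by rw [div_mul_cancel₀ t hbk.ne']
    _ ≤ h (t / b ^ k) := iterate k _ hlower
    _ ≤ M := hM _ ⟨hlower, hupper⟩

lemma bddAbove_image_mul_rpow_neg {T U : ℝ} (hT : 0 < T) (hf : ∀ t ∈ Icc T U, 0 ≤ f t)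
    (hbdd : BddAbove (f '' Icc T U)) (s : ℝ) :
    BddAbove ((fun t => f t * t ^ (-s)) '' Icc T U) := by
  have hcont : ContinuousOn (fun t : ℝ => t ^ (-s)) (Icc T U) := fun t ht =>
    (Real.continuousAt_rpow_const t _ (Or.inl (hT.trans_le ht.1).ne')).continuousWithinAt
  obtain ⟨A, hA⟩ := hbdd
  obtain ⟨B, hB⟩ := isCompact_Icc.bddAbove_image hcont
  refine ⟨A * B, forall_mem_image.2 fun t ht => ?_⟩
  have hfA : f t ≤ A := hA (mem_image_of_mem f ht)
  exact mul_le_mul hfA (hB (mem_image_of_mem _ ht)) (Real.rpow_nonneg (hT.le.trans ht.1) _)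
    ((hf t ht).trans hfA)

lemma isBigO_rpow_of_tendsto_ratio (hb : 1 < b) (hpos : ∀ᶠ t in atTop, 0 < f t)
    (hbdd : ∀ᶠ T in atTop, BddAbove (f '' Icc T (T * b)))
    (hratio : Tendsto (fun t => f (t * b) / f t) atTop (𝓝 (b ^ β))) (hβ : β < s) :
    f =O[atTop] fun t => t ^ s := by
  have hb₀ : 0 < b := one_pos.trans hb
  have hlt : ∀ᶠ t in atTop, f (t * b) / f t < b ^ s :=
    hratio.eventually_lt_const (Real.rpow_lt_rpow_of_exponent_lt hb hβ)
  have hforall : ∀ᶠ T in atTop, ∀ t, T ≤ t → 0 < f t ∧ f (t * b) / f t < b ^ s :=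
    eventually_forall_ge_atTop.2 (hpos.and hlt)
  obtain ⟨T, ⟨hT₀, hbddT⟩, hT⟩ := (((eventually_gt_atTop 0).and hbdd).and hforall).exists
  obtain ⟨M, hM⟩ :=
    bddAbove_image_mul_rpow_neg hT₀ (fun t ht => (hT t ht.1).1.le) hbddT s
  have hmul (t : ℝ) (ht : T ≤ t) : f (t * b) * (t * b) ^ (-s) ≤ f t * t ^ (-s) := by
    have ht₀ : 0 < t := hT₀.trans_le ht
    have hstep : f (t * b) ≤ b ^ s * f t := ((div_lt_iff₀ (hT t ht).1).1 (hT t ht).2).le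
    calc f (t * b) * (t * b) ^ (-s) ≤ b ^ s * f t * (t * b) ^ (-s) := by gcongr
      _ = f t * t ^ (-s) * (b ^ s * b ^ (-s)) := by rw [Real.mul_rpow ht₀.le hb₀.le]; ring
      _ = f t * t ^ (-s) := by rw [← Real.rpow_add hb₀, add_neg_cancel, Real.rpow_zero, mul_one]
  refine Asymptotics.IsBigO.of_bound M ?_
  filter_upwards [eventually_ge_atTop T] with t ht
  have ht₀ : 0 < t := hT₀.trans_le ht
  have hbound : f t * t ^ (-s) ≤ M :=
    le_of_forall_mul_le (h := fun t => f t * t ^ (-s)) hb hT₀ hmul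
      (fun u hu => hM (mem_image_of_mem _ hu)) ht
  rw [Real.norm_of_nonneg (hT t ht).1.le, Real.norm_of_nonneg (Real.rpow_nonneg ht₀.le s)]
  rwa [Real.rpow_neg ht₀.le, ← div_eq_mul_inv, div_le_iff₀ (Real.rpow_pos_of_pos ht₀ s)] at hbound

lemma isBigO_inv_rpow_neg_of_tendsto_ratio (hb : 1 < b) (hpos : ∀ᶠ t in atTop, 0 < f t)
    (hbdd : ∀ᶠ T in atTop, BddAbove ((fun t => (f t)⁻¹) '' Icc T (T * b)))
    (hratio : Tendsto (fun t => f (t * b) / f t) atTop (𝓝 (b ^ β))) (hβ : s < β) :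
    (fun t => (f t)⁻¹) =O[atTop] fun t => t ^ (-s) := by
  have hb₀ : 0 < b := one_pos.trans hb
  refine isBigO_rpow_of_tendsto_ratio hb (hpos.mono fun t => inv_pos.2) hbdd ?_ (neg_lt_neg hβ)
  rw [Real.rpow_neg hb₀.le]
  refine (hratio.inv₀ (Real.rpow_pos_of_pos hb₀ β).ne').congr fun t => ?_
  rw [inv_div, inv_div_inv]

end PowerBounds

/-- The tail `t ↦ μ(|Z| > t)` of `|Z|`, real-valued: it is `0` wherever the measure is infinite. -/
def absTail {Ω : Type*} [MeasurableSpace Ω] (μ : Measure Ω) (Z : Ω → ℝ) (t : ℝ) : ℝ :=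
  (μ {ω | t < |Z ω|}).toReal

namespace RegVarRV

variable {Ω : Type*} [MeasurableSpace Ω] {μ : Measure Ω} {Z : Ω → ℝ} {α s : ℝ}

lemma absTail_pos (hrv : RegVarRV μ Z α) {t : ℝ} (ht : 0 < t) : 0 < absTail μ Z t :=
  hrv.1 t ht

lemma antitoneOn_absTail (hrv : RegVarRV μ Z α) : AntitoneOn (absTail μ Z) (Ioi 0) := by
  intro t ht u _ htu
  have hfinite : μ {ω | t < |Z ω|} ≠ ⊤ := (ENNReal.toReal_pos_iff.1 (hrv.1 t ht)).2.ne
  exact ENNReal.toReal_mono hfinite (measure_mono fun ω hω => htu.trans_lt hω)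

lemma isBigO_absTail (hrv : RegVarRV μ Z α) (hs : s < α) :
    absTail μ Z =O[atTop] fun t => t ^ (-s) := by
  refine isBigO_rpow_of_tendsto_ratio one_lt_two
    ((eventually_gt_atTop 0).mono fun t => hrv.absTail_pos) ?_ (hrv.2 2 two_pos) (neg_lt_neg hs)
  filter_upwards [eventually_gt_atTop 0] with T hT
  exact ⟨absTail μ Z T, forall_mem_image.2 fun t ht =>
    hrv.antitoneOn_absTail hT (hT.trans_le ht.1) ht.1⟩

lemma isBigO_inv_absTail (hrv : RegVarRV μ Z α) (hs : α < s) :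
    (fun t => (absTail μ Z t)⁻¹) =O[atTop] fun t => t ^ s := by
  have hbdd : ∀ᶠ T in atTop, BddAbove ((fun t => (absTail μ Z t)⁻¹) '' Icc T (T * 2)) := by
    filter_upwards [eventually_gt_atTop 0] with T hT
    have hT₂ : 0 < T * 2 := mul_pos hT two_pos
    exact ⟨(absTail μ Z (T * 2))⁻¹, forall_mem_image.2 fun t ht =>
      inv_anti₀ (hrv.absTail_pos hT₂) (hrv.antitoneOn_absTail (hT.trans_le ht.1) hT₂ ht.2)⟩
  simpa only [neg_neg] using isBigO_inv_rpow_neg_of_tendsto_ratio one_lt_two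
    ((eventually_gt_atTop 0).mono fun t => hrv.absTail_pos) hbdd (hrv.2 2 two_pos)
    (neg_lt_neg hs)

end RegVarRV

namespace RegVarSeq

variable {l : ℕ → ℝ} {ρ r : ℝ}

lemma tendsto_floor_ratio (hreg : RegVarSeq l ρ) :
    Tendsto (fun t : ℝ => l ⌊t * 2⌋₊ / l ⌊t⌋₊) atTop (𝓝 (2 ^ ρ)) := by
  have hfloor (t : ℝ) : ⌊2⁻¹ * (⌊t * 2⌋₊ : ℝ)⌋₊ = ⌊t⌋₊ := by
    rw [inv_mul_eq_div, Nat.floor_div_ofNat, Nat.floor_natCast]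
    exact_mod_cast Nat.mul_cast_floor_div_cancel two_ne_zero t
  have hhalf : Tendsto (fun t : ℝ => l ⌊t⌋₊ / l ⌊t * 2⌋₊) atTop (𝓝 (2⁻¹ ^ ρ)) := by
    simpa only [Function.comp_def, id, hfloor] using (hreg 2⁻¹ (by norm_num)).comp
      (tendsto_nat_floor_atTop.comp (tendsto_id.atTop_mul_const (zero_lt_two' ℝ)))
  rw [Real.inv_rpow zero_le_two] at hhalf
  simpa only [inv_div, inv_inv] using hhalf.inv₀ (by positivity)

lemma isBigO_inv (hreg : RegVarSeq l ρ) (hpos : ∀ᶠ n in atTop, 0 < l n) (hr : r < ρ) :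
    (fun n => (l n)⁻¹) =O[atTop] fun n : ℕ => (n : ℝ) ^ (-r) := by
  have hbdd (T : ℝ) : BddAbove ((fun t : ℝ => (l ⌊t⌋₊)⁻¹) '' Icc T (T * 2)) := by
    refine (((finite_Icc ⌊T⌋₊ ⌊T * 2⌋₊).image fun n => (l n)⁻¹).subset ?_).bddAbove
    exact image_subset_iff.2 fun t ht => mem_image_of_mem (fun n => (l n)⁻¹)
      ⟨Nat.floor_mono ht.1, Nat.floor_mono ht.2⟩
  have hfloor : (fun t : ℝ => (l ⌊t⌋₊)⁻¹) =O[atTop] fun t => t ^ (-r) :=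
    isBigO_inv_rpow_neg_of_tendsto_ratio one_lt_two (tendsto_nat_floor_atTop.eventually hpos)
      (Eventually.of_forall hbdd) hreg.tendsto_floor_ratio hr
  simpa only [Function.comp_def, Nat.floor_natCast] using
    hfloor.comp_tendsto tendsto_natCast_atTop_atTop

lemma tendsto_atTop (hreg : RegVarSeq l ρ) (hpos : ∀ᶠ n in atTop, 0 < l n) (hρ : 0 < ρ) :
    Tendsto l atTop atTop := by
  have hzero : Tendsto (fun n => (l n)⁻¹) atTop (𝓝 0) :=
    (hreg.isBigO_inv hpos (half_lt_self hρ)).trans_tendsto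
      ((tendsto_rpow_neg_atTop (half_pos hρ)).comp tendsto_natCast_atTop_atTop)
  simpa only [Pi.inv_def, inv_inv] using (tendsto_nhdsWithin_iff.2
    ⟨hzero, hpos.mono fun n => inv_pos.2⟩).inv_tendsto_nhdsGT_zero

end RegVarSeq

section JumpRatio

/-- The ratio of `C(n, j + 1) * F(l n ^ (1 - ε)) ^ (j + 1)`, the union bound for more than `j` of
`n` independent variables with tail `F` exceeding `l n ^ (1 - ε)`, to the reference rate
`(n * F(l n)) ^ j`. -/
def jumpRatio (F : ℝ → ℝ) (l : ℕ → ℝ) (ε : ℝ) (j n : ℕ) : ℝ :=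
  ((n * F (l n)) ^ j)⁻¹ * n.choose (j + 1) * F (l n ^ (1 - ε)) ^ (j + 1)

/-- The exponent `p` in the bound `jumpRatio F l ε j n = O(n * l n ^ (-p))`, for a tail `F` between
constant multiples of `t ^ (-b)` and `t ^ (-a)`. -/
def jumpExponent (a b ε : ℝ) (j : ℕ) : ℝ :=
  (1 - ε) * a * (j + 1) - b * j

variable {F : ℝ → ℝ} {l : ℕ → ℝ} {a b r ε α ρ : ℝ} {j : ℕ}

lemma isBigO_jumpRatio (hupper : F =O[atTop] fun t => t ^ (-a))
    (hlower : (fun t => (F t)⁻¹) =O[atTop] fun t => t ^ b)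
    (hl : Tendsto l atTop atTop) (hε : ε < 1) :
    jumpRatio F l ε j =O[atTop] fun n => n * (l n)⁻¹ ^ jumpExponent a b ε j := by
  have hchoose : (fun n : ℕ => (n.choose (j + 1) : ℝ)) =O[atTop] fun n => (n : ℝ) ^ (j + 1) :=
    (isTheta_choose (j + 1)).isBigO
  have hinv : (fun n => (F (l n))⁻¹ ^ j) =O[atTop] fun n => (l n ^ b) ^ j :=
    (hlower.comp_tendsto hl).pow j
  have hjumps : (fun n => F (l n ^ (1 - ε)) ^ (j + 1)) =O[atTop]
      fun n => ((l n ^ (1 - ε)) ^ (-a)) ^ (j + 1) :=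
    (hupper.comp_tendsto ((tendsto_rpow_atTop (sub_pos.2 hε)).comp hl)).pow (j + 1)
  have hpowers : (fun n : ℕ => (n : ℝ)⁻¹ ^ j) =O[atTop] fun n : ℕ => (n : ℝ)⁻¹ ^ j :=
    Asymptotics.isBigO_refl _ _
  refine (((hpowers.mul hinv).mul hchoose).mul hjumps).congr' ?_ ?_
  · exact .of_forall fun n => by simp only [jumpRatio, mul_pow, mul_inv, inv_pow]
  · filter_upwards [eventually_gt_atTop 0, hl.eventually_gt_atTop 0] with n hn hln
    have hn₀ : (n : ℝ) ≠ 0 := Nat.cast_ne_zero.2 hn.ne'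
    have hcancel : (n : ℝ)⁻¹ ^ j * (n : ℝ) ^ (j + 1) = n := by
      rw [pow_succ, ← mul_assoc, ← mul_pow, inv_mul_cancel₀ hn₀, one_pow, one_mul]
    have hexponent : (l n ^ b) ^ j * ((l n ^ (1 - ε)) ^ (-a)) ^ (j + 1) =
        (l n)⁻¹ ^ jumpExponent a b ε j := by
      rw [← Real.rpow_mul_natCast hln.le, ← Real.rpow_mul hln.le, ← Real.rpow_mul_natCast hln.le,
        ← Real.rpow_add hln, Real.inv_rpow hln.le, ← Real.rpow_neg hln.le, jumpExponent]
      push_cast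
      ring_nf
    rw [← hexponent, mul_right_comm (_ ^ j) (_ ^ j), hcancel, mul_assoc]

lemma tendsto_jumpRatio_zero (hupper : F =O[atTop] fun t => t ^ (-a))
    (hlower : (fun t => (F t)⁻¹) =O[atTop] fun t => t ^ b) (hl : Tendsto l atTop atTop)
    (hlinv : (fun n => (l n)⁻¹) =O[atTop] fun n : ℕ => (n : ℝ) ^ (-r)) (hε : ε < 1)
    (hp : 0 ≤ jumpExponent a b ε j) (hrp : 1 < r * jumpExponent a b ε j) :
    Tendsto (jumpRatio F l ε j) atTop (𝓝 0) := by
  set p := jumpExponent a b ε j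
  have hpow : (fun n => (l n)⁻¹ ^ p) =O[atTop] fun n : ℕ => ((n : ℝ) ^ (-r)) ^ p :=
    hlinv.rpow hp (.of_forall fun n => Real.rpow_nonneg n.cast_nonneg _)
  have hbound : jumpRatio F l ε j =O[atTop] fun n : ℕ => (n : ℝ) ^ (-(r * p - 1)) := by
    refine (isBigO_jumpRatio hupper hlower hl hε).trans
      (((Asymptotics.isBigO_refl (fun n : ℕ => (n : ℝ)) atTop).mul hpow).congr' .rfl ?_)
    filter_upwards [eventually_gt_atTop 0] with n hn
    have hn₀ : (0 : ℝ) < n := Nat.cast_pos.2 hn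
    rw [← Real.rpow_mul hn₀.le, ← Real.rpow_one_add' hn₀.le (by linarith)]
    ring_nf
  exact hbound.trans_tendsto
    ((tendsto_rpow_neg_atTop (sub_pos.2 hrp)).comp tendsto_natCast_atTop_atTop)

lemma one_lt_mul_jumpExponent (hα : 0 < α) (hρ : 0 < ρ)
    (hε : ε < (α * ρ - 1) / ((j + 1) * α * ρ)) : 1 < ρ * jumpExponent α α ε j := by
  rw [lt_div_iff₀ (by positivity)] at hε
  rw [jumpExponent]
  linarith

lemma lt_one_of_lt_sub_one_div (hα : 0 < α) (hρ : 0 < ρ)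
    (hε : ε < (α * ρ - 1) / ((j + 1) * α * ρ)) : ε < 1 := by
  refine hε.trans ((div_lt_one (by positivity)).2 ?_)
  have : 0 ≤ j * α * ρ := by positivity
  linarith

lemma exists_one_lt_mul_jumpExponent (hρ : 0 < ρ) (h : 1 < ρ * jumpExponent α α ε j) :
    ∃ a < α, ∃ b > α, ∃ r < ρ, 0 < r ∧ 1 < r * jumpExponent a b ε j := by
  have hcont : Continuous fun δ : ℝ => (ρ - δ) * jumpExponent (α - δ) (α + δ) ε j := by
    unfold jumpExponent
    fun_prop
  have hnear : ∀ᶠ δ in 𝓝 0, 1 < (ρ - δ) * jumpExponent (α - δ) (α + δ) ε j :=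
    (hcont.tendsto 0).eventually_const_lt (by simpa only [sub_zero, add_zero] using h)
  obtain ⟨δ, ⟨hδ, hδρ⟩, hδ₀⟩ := (((hnear.and (eventually_lt_nhds hρ)).filter_mono
    nhdsWithin_le_nhds).and (self_mem_nhdsWithin (s := Ioi 0))).exists
  exact ⟨α - δ, sub_lt_self α hδ₀, α + δ, lt_add_of_pos_right α hδ₀, ρ - δ, sub_lt_self ρ hδ₀,
    sub_pos.2 hδρ, hδ⟩

end JumpRatio

theorem more_than_j_jumps_negligible_general {Ω : Type*} [MeasurableSpace Ω] {μ : Measure Ω}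
    {Z : Ω → ℝ} {α : ℝ} (hα : 0 < α) (hrv : RegVarRV μ Z α) {l : ℕ → ℝ}
    (hlpos : ∀ᶠ n in atTop, 0 < l n) {ρ : ℝ} (hρ : 0 < ρ) (hreg : RegVarSeq l ρ) {j : ℕ} {ε : ℝ}
    (hε : ε < (α * ρ - 1) / ((j + 1) * α * ρ)) :
    Tendsto (jumpRatio (absTail μ Z) l ε j) atTop (𝓝 0) := by
  obtain ⟨a, ha, b, hb, r, hr, hr₀, hrp⟩ :=
    exists_one_lt_mul_jumpExponent hρ (one_lt_mul_jumpExponent hα hρ hε)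
  have hp : 0 < jumpExponent a b ε j := pos_of_mul_pos_right (one_pos.trans hrp) hr₀.le
  exact tendsto_jumpRatio_zero (hrv.isBigO_absTail ha) (hrv.isBigO_inv_absTail hb)
    (hreg.tendsto_atTop hlpos hρ) (hreg.isBigO_inv hlpos hr) (lt_one_of_lt_sub_one_div hα hρ hε)
    hp.le hrp

/-- The probability that `j+1` of `n` iid regularly varying variables exceed
`λ_n^{1-ε₀}` is negligible compared to `[n P(|Z| > λ_n)]^{j}`, provided `αρ > 1` and
`ε₀ < (αρ − 1)/((j+1)αρ)`. -/
theorem more_than_j_jumps_negligible {Ω : Type*} [MeasurableSpace Ω]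
    (μ : Measure Ω) [IsProbabilityMeasure μ]
    (Z : Ω → ℝ) (hmeas : Measurable Z)
    (α : ℝ) (hα : 0 < α) (hrv : RegVarRV μ Z α)
    (l : ℕ → ℝ) (hlpos : ∀ n, 0 < l n)
    (ρ : ℝ) (hρ : 0 < ρ) (hreg : RegVarSeq l ρ) (hlim : Tendsto l atTop atTop)
    (hαρ : 1 < α * ρ)
    (j : ℕ) (hj : 1 ≤ j)
    (ε₀ : ℝ) (hε₀ : 0 < ε₀) (hε₀' : ε₀ < (α * ρ - 1) / ((j + 1) * α * ρ)) :
    Tendsto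
      (fun n : ℕ =>
        (((n : ℝ) * (μ {ω | l n < |Z ω|}).toReal) ^ j)⁻¹ * (n.choose (j + 1) : ℝ) *
          ((μ {ω | (l n) ^ ((1 : ℝ) - ε₀) < |Z ω|}).toReal) ^ (j + 1))
      atTop (nhds 0) := by
  exact more_than_j_jumps_negligible_general hα hrv (.of_forall hlpos) hρ hreg hε₀'

end
end

section
/- Let Z be a real random variable regularly varying with index −α (α>0), and let (λ_n) be a positive sequence, regularly varying with index ρ > 0 and λ_n → ∞, such that either Var(Z) < ∞ and ρ > 1/2, or Var(Z) = ∞ and αρ > 1. Then there exists ε̄ > 0 such that for every ε₀ ∈ (0, ε̄): lim_{n→∞} n · Var( Z·1{|Z| ≤ λ_n^{1−ε₀}} ) / λ_n^{2−ε₀} = 0. -/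
open MeasureTheory ProbabilityTheory Filter Set

noncomputable section

/-!
The truncated second moment obeys `E[Z²; |Z| ≤ T] ≤ T ^ (2 - p) E|Z| ^ p` for `p ≤ 2`. With
`T = λ_n ^ (1 - ε)` the quantity to be estimated is therefore at most `E|Z| ^ p` times
`n / λ_n ^ q`, where `q = p + ε (1 - p)` is close to `p`. Since `λ_n` eventually dominates `n ^ r`
for every `r < ρ`, this tends to zero once `ρ q > 1`, so all that is needed is a finite moment of
order `p ∈ (1 / ρ, 2]`. If the variance is finite, take `p = 2`. Otherwise every order below `α` has
a finite moment, which forces `α ≤ 2`, and any `p` between `1 / ρ` and `α` will do. The growth of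
`λ_n` and the decay of the tail of `Z` both come from iterating the defining limit along powers
of two.
-/

open Asymptotics

section DyadicIteration

theorem bddAbove_range_of_eventually_le_half {β : Type*} [Preorder β] [IsDirectedOrder β]
    {u : ℕ → β} (hu : ∀ᶠ n in atTop, u n ≤ u (n / 2)) : BddAbove (range u) := by
  obtain ⟨N, hN⟩ := eventually_atTop.1 hu
  have : Nonempty β := ⟨u 0⟩
  obtain ⟨B, hB⟩ := ((finite_Iic N).image u).bddAbove
  refine ⟨B, forall_mem_range.2 fun n => ?_⟩
  induction n using Nat.strong_induction_on with
  | _ n ih =>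
    rcases le_or_gt n N with hn | hn
    · exact hB (mem_image_of_mem u hn)
    · exact (hN n hn.le).trans (ih (n / 2) (by omega))

theorem le_of_two_mul_le_of_le_on_Icc {β : Type*} [Preorder β] {g : ℝ → β} {t₀ : ℝ} {B : β}
    (ht₀ : 0 < t₀) (hbase : ∀ t ∈ Icc t₀ (2 * t₀), g t ≤ B)
    (hstep : ∀ t, t₀ ≤ t → g (2 * t) ≤ g t) {t : ℝ} (ht : t₀ ≤ t) : g t ≤ B := by
  have hdyadic (k : ℕ) : ∀ t ∈ Icc t₀ (2 ^ k * t₀), g t ≤ B := by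
    induction k with
    | zero => exact fun t ht => hbase t ⟨ht.1, by linarith [ht.2]⟩
    | succ k ih =>
      intro t ht
      rcases le_total t (2 * t₀) with h | h
      · exact hbase t ⟨ht.1, h⟩
      · have hhalf : t / 2 ∈ Icc t₀ (2 ^ k * t₀) :=
          ⟨by linarith, by linarith [pow_succ' (2 : ℝ) k ▸ ht.2]⟩
        simpa only [mul_div_cancel₀ t two_ne_zero] using
          (hstep (t / 2) hhalf.1).trans (ih _ hhalf)
  obtain ⟨k, hk⟩ := pow_unbounded_of_one_lt (t / t₀) one_lt_two
  exact hdyadic k t ⟨ht, ((div_lt_iff₀ ht₀).1 hk).le⟩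

theorem isBigO_rpow_neg_of_two_mul_le {f : ℝ → ℝ} {q : ℝ} (hq : 0 ≤ q) (hf_nonneg : ∀ t, 0 ≤ f t)
    (hf_bdd : BddAbove (range f)) (hf : ∀ᶠ t in atTop, f (2 * t) ≤ 2 ^ (-q) * f t) :
    f =O[atTop] fun t => t ^ (-q) := by
  obtain ⟨B, hB⟩ := hf_bdd
  obtain ⟨t₀, ht₀⟩ := (hf.and (eventually_gt_atTop 0)).exists_forall_of_atTop
  have hpos (t : ℝ) (ht : t₀ ≤ t) : 0 < t := (ht₀ t ht).2
  have hbase : ∀ t ∈ Icc t₀ (2 * t₀), t ^ q * f t ≤ (2 * t₀) ^ q * B := fun t ht => by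
    have := hpos t ht.1
    have := hpos t₀ le_rfl
    gcongr
    exacts [hf_nonneg t, ht.2, hB (mem_range_self t)]
  have hstep (t : ℝ) (ht : t₀ ≤ t) : (2 * t) ^ q * f (2 * t) ≤ t ^ q * f t := by
    have := hpos t ht
    calc (2 * t) ^ q * f (2 * t) ≤ (2 * t) ^ q * (2 ^ (-q) * f t) := by gcongr; exact (ht₀ t ht).1
      _ = t ^ q * f t := by
        rw [Real.mul_rpow zero_le_two this.le, Real.rpow_neg zero_le_two]
        field_simp
  refine IsBigO.of_bound ((2 * t₀) ^ q * B) ?_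
  filter_upwards [eventually_ge_atTop t₀] with t ht
  have hbound := le_of_two_mul_le_of_le_on_Icc (hpos t₀ le_rfl) hbase hstep ht
  have htpos := hpos t ht
  rw [Real.norm_of_nonneg (hf_nonneg t), Real.norm_of_nonneg (by positivity),
    Real.rpow_neg htpos.le, ← div_eq_mul_inv, le_div_iff₀' (by positivity)]
  exact hbound

end DyadicIteration

theorem isLittleO_rpow_rpow_atTop {r s : ℝ} (hrs : r < s) :
    (fun t : ℝ => t ^ r) =o[atTop] fun t => t ^ s := by
  refine (isLittleO_iff_tendsto' ?_).2 ?_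
  · filter_upwards [eventually_gt_atTop 0] with t ht h
    exact absurd h (Real.rpow_pos_of_pos ht s).ne'
  · refine (tendsto_rpow_neg_atTop (sub_pos.2 hrs)).congr' ?_
    filter_upwards [eventually_gt_atTop 0] with t ht
    rw [neg_sub, Real.rpow_sub ht]

namespace RegVarSeq

variable {l : ℕ → ℝ} {ρ : ℝ}

theorem eventually_half_le (hreg : RegVarSeq l ρ) (hlpos : ∀ n, 0 < l n) {r : ℝ} (hr : r < ρ) :
    ∀ᶠ n in atTop, 2 ^ r * l (n / 2) ≤ l n := by
  have hlt : (1 / 2 : ℝ) ^ ρ < (1 / 2) ^ r :=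
    Real.rpow_lt_rpow_of_exponent_gt (by norm_num) (by norm_num) hr
  have hfloor (n : ℕ) : ⌊(1 / 2 : ℝ) * n⌋₊ = n / 2 := by
    rw [one_div_mul_eq_div, Nat.floor_div_ofNat, Nat.floor_natCast]
  filter_upwards [(hreg (1 / 2) one_half_pos).eventually_lt_const hlt] with n hn
  rw [hfloor, div_lt_iff₀ (hlpos n), Real.div_rpow zero_le_one zero_le_two, Real.one_rpow,
    one_div_mul_eq_div, lt_div_iff₀' (by positivity)] at hn
  exact hn.le

theorem natCast_rpow_isBigO (hreg : RegVarSeq l ρ) (hlpos : ∀ n, 0 < l n) {r : ℝ} (hr₀ : 0 ≤ r)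
    (hr : r < ρ) : (fun n : ℕ => (n : ℝ) ^ r) =O[atTop] l := by
  -- The shift `n + 1` makes `n + 1 ≤ 2 * (n / 2 + 1)` hold despite the floor.
  have hhalf : ∀ᶠ n : ℕ in atTop,
      ((n : ℝ) + 1) ^ r / l n ≤ (((n / 2 : ℕ) : ℝ) + 1) ^ r / l (n / 2) := by
    filter_upwards [hreg.eventually_half_le hlpos hr] with n hn
    have hln := hlpos (n / 2)
    have hsucc : (n : ℝ) + 1 ≤ 2 * (((n / 2 : ℕ) : ℝ) + 1) := by
      exact_mod_cast (by omega : n + 1 ≤ 2 * (n / 2 + 1))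
    calc ((n : ℝ) + 1) ^ r / l n
        ≤ (2 * (((n / 2 : ℕ) : ℝ) + 1)) ^ r / (2 ^ r * l (n / 2)) := by gcongr
      _ = (((n / 2 : ℕ) : ℝ) + 1) ^ r / l (n / 2) := by
        rw [Real.mul_rpow zero_le_two (by positivity),
          mul_div_mul_left _ _ (Real.rpow_pos_of_pos two_pos r).ne']
  obtain ⟨C, hC⟩ := bddAbove_range_of_eventually_le_half
    (u := fun n : ℕ => ((n : ℝ) + 1) ^ r / l n) hhalf
  refine IsBigO.of_bound C (Eventually.of_forall fun n => ?_)
  rw [Real.norm_of_nonneg (by positivity), Real.norm_of_nonneg (hlpos n).le]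
  calc (n : ℝ) ^ r ≤ ((n : ℝ) + 1) ^ r := by gcongr; linarith
    _ ≤ C * l n := (div_le_iff₀ (hlpos n)).1 (hC (mem_range_self n))

theorem natCast_isLittleO_rpow (hreg : RegVarSeq l ρ) (hlpos : ∀ n, 0 < l n) (hρ : 0 < ρ) {q : ℝ}
    (hq : 1 / ρ < q) : (fun n : ℕ => (n : ℝ)) =o[atTop] fun n => l n ^ q := by
  have hq₀ : 0 < q := (one_div_pos.2 hρ).trans hq
  obtain ⟨r, hqr, hrρ⟩ := exists_between ((one_div_lt hρ hq₀).1 hq)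
  have hrq : 1 < r * q := (div_lt_iff₀ hq₀).1 hqr
  have hpow : (fun n : ℕ => (n : ℝ)) =o[atTop] fun n : ℕ => ((n : ℝ) ^ r) ^ q := by
    simpa only [Function.comp_def, Real.rpow_one, ← Real.rpow_mul (Nat.cast_nonneg _)] using
      (isLittleO_rpow_rpow_atTop hrq).comp_tendsto tendsto_natCast_atTop_atTop
  have hr₀ : 0 ≤ r := (one_div_pos.2 hq₀).le.trans hqr.le
  exact hpow.trans_isBigO <| (hreg.natCast_rpow_isBigO hlpos hr₀ hrρ).rpow hq₀.le <|
    Eventually.of_forall fun n => (hlpos n).le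

end RegVarSeq

section Moments

variable {Ω : Type*} [MeasurableSpace Ω] {μ : Measure Ω} [IsFiniteMeasure μ] {Z : Ω → ℝ}

theorem integrable_abs_rpow_of_tail_isBigO (hZ : AEMeasurable Z μ) {p q : ℝ} (hp : 0 < p)
    (hpq : p < q)
    (htail : (fun t => μ.real {ω | t < |Z ω|}) =O[atTop] fun t => t ^ (-q)) :
    Integrable (fun ω => |Z ω| ^ p) μ := by
  have hanti : Antitone fun t => μ.real {ω | t < |Z ω|} := fun s t hst =>
    measureReal_mono fun ω (hω : t < |Z ω|) => hst.trans_lt hω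
  have hbdd : (fun t => μ.real {ω | t < |Z ω|}) =O[nhdsWithin 0 (Ioi 0)] fun t => t ^ (-0 : ℝ) := by
    simp only [neg_zero, Real.rpow_zero]
    refine (isBigO_one_iff ℝ).2 (isBoundedUnder_of ⟨μ.real univ, fun t => ?_⟩)
    simpa only [Real.norm_of_nonneg measureReal_nonneg] using measureReal_mono (subset_univ _)
  have hmellin : IntegrableOn (fun t => t ^ (p - 1) * μ.real {ω | t < |Z ω|}) (Ioi 0) :=
    mellin_convergent_of_isBigO_scalar (hanti.locallyIntegrable.locallyIntegrableOn _)
      htail hpq hbdd hp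
  refine ⟨(hZ.abs.pow_const p).aestronglyMeasurable, ?_⟩
  rw [hasFiniteIntegral_iff_ofReal (ae_of_all _ fun ω => by positivity),
    lintegral_rpow_eq_lintegral_meas_lt_mul μ (ae_of_all _ fun ω => abs_nonneg _) hZ.abs hp]
  refine ENNReal.mul_lt_top ENNReal.ofReal_lt_top ?_
  convert hmellin.lintegral_lt_top using 1
  refine setLIntegral_congr_fun measurableSet_Ioi fun t (ht : 0 < t) => ?_
  rw [mul_comm, ENNReal.ofReal_mul (by positivity), ofReal_measureReal]

namespace RegVarRV

variable {α : ℝ}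

theorem tail_isBigO (hrv : RegVarRV μ Z α) {q : ℝ} (hq₀ : 0 ≤ q) (hq : q < α) :
    (fun t => μ.real {ω | t < |Z ω|}) =O[atTop] fun t => t ^ (-q) := by
  have hlt : (2 : ℝ) ^ (-α) < 2 ^ (-q) :=
    Real.rpow_lt_rpow_of_exponent_lt one_lt_two (neg_lt_neg hq)
  refine isBigO_rpow_neg_of_two_mul_le hq₀ (fun _ => measureReal_nonneg)
    ⟨μ.real univ, forall_mem_range.2 fun _ => measureReal_mono (subset_univ _)⟩ ?_
  filter_upwards [(hrv.2 2 two_pos).eventually_lt_const hlt, eventually_gt_atTop 0] with t ht ht₀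
  rw [mul_comm 2 t]
  exact ((div_lt_iff₀ (hrv.1 t ht₀)).1 ht).le

theorem integrable_abs_rpow (hrv : RegVarRV μ Z α) (hZ : AEMeasurable Z μ) {p : ℝ} (hp : 0 < p)
    (hpα : p < α) : Integrable (fun ω => |Z ω| ^ p) μ := by
  obtain ⟨q, hpq, hqα⟩ := exists_between hpα
  exact integrable_abs_rpow_of_tail_isBigO hZ hp hpq (hrv.tail_isBigO (hp.trans hpq).le hqα)

end RegVarRV

theorem evariance_ne_top_iff_integrable_abs_rpow_two (hZ : AEMeasurable Z μ) :
    evariance Z μ ≠ ⊤ ↔ Integrable (fun ω => |Z ω| ^ (2 : ℝ)) μ := by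
  simp only [← lt_top_iff_ne_top, evariance_lt_top_iff_memLp hZ.aestronglyMeasurable,
    memLp_two_iff_integrable_sq hZ.aestronglyMeasurable, Real.rpow_two, sq_abs]

theorem RegVarRV.exists_integrable_abs_rpow {α ρ : ℝ} (hrv : RegVarRV μ Z α)
    (hZ : AEMeasurable Z μ) (hρ : 0 < ρ)
    (hcase : (evariance Z μ ≠ ⊤ ∧ 1 / 2 < ρ) ∨ (evariance Z μ = ⊤ ∧ 1 < α * ρ)) :
    ∃ p ≤ 2, 1 / ρ < p ∧ Integrable (fun ω => |Z ω| ^ p) μ := by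
  rcases hcase with ⟨hfin, hρ₂⟩ | ⟨hinf, hαρ⟩
  · exact ⟨2, le_rfl, (one_div_lt two_pos hρ).1 hρ₂,
      (evariance_ne_top_iff_integrable_abs_rpow_two hZ).1 hfin⟩
  · have hα₂ : α ≤ 2 := by
      by_contra! hα
      exact (evariance_ne_top_iff_integrable_abs_rpow_two hZ).2
        (hrv.integrable_abs_rpow hZ two_pos hα) hinf
    obtain ⟨p, hρp, hpα⟩ := exists_between ((div_lt_iff₀ hρ).2 hαρ)
    exact ⟨p, hpα.le.trans hα₂, hρp,
      hrv.integrable_abs_rpow hZ ((one_div_pos.2 hρ).trans hρp) hpα⟩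

end Moments

theorem sq_truncation_le {x T p : ℝ} (hp : p ≤ 2) (hT : 0 ≤ T) :
    (if |x| ≤ T then x else 0) ^ 2 ≤ T ^ (2 - p) * |x| ^ p := by
  split_ifs with hx
  · calc x ^ 2 = |x| ^ (2 - p) * |x| ^ p := by
          rw [← Real.rpow_add' (abs_nonneg x) (by norm_num), sub_add_cancel, Real.rpow_two, sq_abs]
      _ ≤ T ^ (2 - p) * |x| ^ p := by gcongr
  · rw [zero_pow two_ne_zero]
    positivity

section TruncatedVariance

variable {Ω : Type*} [MeasurableSpace Ω] {μ : Measure Ω} [IsProbabilityMeasure μ] {Z : Ω → ℝ}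

theorem variance_truncation_le (hZ : AEMeasurable Z μ) {p T : ℝ} (hp : p ≤ 2)
    (hint : Integrable (fun ω => |Z ω| ^ p) μ) (hT : 0 ≤ T) :
    variance (fun ω => if |Z ω| ≤ T then Z ω else 0) μ ≤ T ^ (2 - p) * ∫ ω, |Z ω| ^ p ∂μ := by
  have htrunc : Measurable fun x : ℝ => if |x| ≤ T then x else 0 :=
    Measurable.ite (measurableSet_le measurable_id.abs measurable_const) measurable_id
      measurable_const
  have hZtrunc : AEStronglyMeasurable (fun ω => if |Z ω| ≤ T then Z ω else 0) μ :=
    (htrunc.comp_aemeasurable hZ).aestronglyMeasurable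
  calc variance (fun ω => if |Z ω| ≤ T then Z ω else 0) μ
      ≤ ∫ ω, (if |Z ω| ≤ T then Z ω else 0) ^ 2 ∂μ :=
        variance_le_expectation_sq hZtrunc
    _ ≤ ∫ ω, T ^ (2 - p) * |Z ω| ^ p ∂μ :=
        integral_mono_of_nonneg (ae_of_all _ fun _ => sq_nonneg _) (hint.const_mul _)
          (ae_of_all _ fun _ => sq_truncation_le hp hT)
    _ = T ^ (2 - p) * ∫ ω, |Z ω| ^ p ∂μ := integral_const_mul _ _

theorem mul_variance_truncation_div_le (hZ : AEMeasurable Z μ) {p : ℝ} (hp : p ≤ 2)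
    (hint : Integrable (fun ω => |Z ω| ^ p) μ) {a x : ℝ} (ha : 0 ≤ a) (hx : 0 < x) (ε : ℝ) :
    a * variance (fun ω => if |Z ω| ≤ x ^ (1 - ε) then Z ω else 0) μ / x ^ (2 - ε) ≤
      (∫ ω, |Z ω| ^ p ∂μ) * (a / x ^ (p + ε * (1 - p))) := by
  have hexp : (x ^ (1 - ε)) ^ (2 - p) / x ^ (2 - ε) = (x ^ (p + ε * (1 - p)))⁻¹ := by
    rw [← Real.rpow_mul hx.le, ← Real.rpow_sub hx, ← Real.rpow_neg hx.le]
    congr 1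
    ring
  calc a * variance (fun ω => if |Z ω| ≤ x ^ (1 - ε) then Z ω else 0) μ / x ^ (2 - ε)
      ≤ a * ((x ^ (1 - ε)) ^ (2 - p) * ∫ ω, |Z ω| ^ p ∂μ) / x ^ (2 - ε) := by
        gcongr
        exact variance_truncation_le hZ hp hint (by positivity)
    _ = (∫ ω, |Z ω| ^ p ∂μ) * (a * ((x ^ (1 - ε)) ^ (2 - p) / x ^ (2 - ε))) := by ring
    _ = (∫ ω, |Z ω| ^ p ∂μ) * (a / x ^ (p + ε * (1 - p))) := by rw [hexp, div_eq_mul_inv]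

theorem truncated_variance_negligible_general (hZ : AEMeasurable Z μ) {l : ℕ → ℝ}
    (hlpos : ∀ n, 0 < l n) {ρ : ℝ} (hρ : 0 < ρ) (hreg : RegVarSeq l ρ) {p : ℝ} (hp : p ≤ 2)
    (hint : Integrable (fun ω => |Z ω| ^ p) μ) {ε : ℝ} (hε : ε ∈ Ioo 0 (p - 1 / ρ)) :
    Tendsto
      (fun n : ℕ => (n : ℝ) * variance (fun ω => if |Z ω| ≤ l n ^ (1 - ε) then Z ω else 0) μ /
        l n ^ (2 - ε))
      atTop (nhds 0) := by
  have hq : 1 / ρ < p + ε * (1 - p) := by nlinarith [hε.1, hε.2]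
  have hbound : Tendsto
      (fun n : ℕ => (∫ ω, |Z ω| ^ p ∂μ) * ((n : ℝ) / l n ^ (p + ε * (1 - p)))) atTop (nhds 0) := by
    simpa only [mul_zero] using
      (hreg.natCast_isLittleO_rpow hlpos hρ hq).tendsto_div_nhds_zero.const_mul _
  refine squeeze_zero (fun n => ?_) (fun n => ?_) hbound
  · have := hlpos n
    have := variance_nonneg (fun ω => if |Z ω| ≤ l n ^ (1 - ε) then Z ω else 0) μ
    positivity
  · exact mul_variance_truncation_div_le hZ hp hint n.cast_nonneg (hlpos n) ε

end TruncatedVariance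

/-- **The truncated variance is negligible.** For a regularly varying `Z` and a regularly
varying scaling sequence `λ_n` (with `ρ > 1/2` if the variance is finite, `αρ > 1` if it is
infinite), there exists `ε̄ > 0` such that for every `ε₀ ∈ (0, ε̄)`,
`n · Var(Z 1{|Z| ≤ λ_n^{1-ε₀}}) / λ_n^{2-ε₀} → 0`. -/
theorem truncated_variance_negligible {Ω : Type*} [MeasurableSpace Ω]
    (μ : Measure Ω) [IsProbabilityMeasure μ]
    (Z : Ω → ℝ) (hmeas : Measurable Z)
    (α : ℝ) (hα : 0 < α) (hrv : RegVarRV μ Z α)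
    (l : ℕ → ℝ) (hlpos : ∀ n, 0 < l n)
    (ρ : ℝ) (hρ : 0 < ρ) (hreg : RegVarSeq l ρ) (hlim : Tendsto l atTop atTop)
    (hcase : (evariance Z μ ≠ ⊤ ∧ 1 / 2 < ρ) ∨ (evariance Z μ = ⊤ ∧ 1 < α * ρ)) :
    ∃ εbar : ℝ, 0 < εbar ∧ ∀ ε₀ ∈ Ioo (0:ℝ) εbar,
      Tendsto
        (fun n : ℕ =>
          (n : ℝ) *
            variance (fun ω => if |Z ω| ≤ (l n) ^ ((1 : ℝ) - ε₀) then Z ω else 0) μ /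
              (l n) ^ ((2 : ℝ) - ε₀))
        atTop (nhds 0) := by
  obtain ⟨p, hp, hρp, hint⟩ := hrv.exists_integrable_abs_rpow hmeas.aemeasurable hρ hcase
  exact ⟨p - 1 / ρ, sub_pos.2 hρp, fun _ hε =>
    truncated_variance_negligible_general hmeas.aemeasurable hlpos hρ hreg hp hint hε⟩

end
end

section
/- Fix α > 0, K > 0, θ ∈ (0,1), reals c > m, and M > κ where κ = (1−θ)K/(c−m). Let ν_α be the Borel measure on (0,∞) with ν_α((x,∞)) = x^{−α} for x > 0 and let Leb be Lebesgue measure on [0,M]. Then for every l ∈ (0, κ): (ν_α × Leb)( { (z,u) ∈ (0,∞) × [0,M] : min(z,K) − θK > l·(c−m) and u < M − l } ) = (M − l)·( l·(c−m) + θK )^{−α}. This is the first-level large-deviation limit measure μ_L^{(1)}((l,∞)) of long intense periods above level θK for a buffer-K queue: the set describes the one-jump configurations (jump size z at time u, with drift −(c−m) and reflection at the buffer K) whose resulting path stays above θK for a period longer than l within [0,M]. -/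
open MeasureTheory Filter Set

noncomputable section

/-! Since `l * (c - m) + θ * K < K`, truncating the jump size at the buffer `K` does not affect
whether it exceeds the threshold `l * (c - m) + θ * K`. The jump size and the jump time are
therefore constrained separately, and the set of configurations is a rectangle. -/

section OrderedGroup

variable {G : Type*} [AddCommGroup G] [LinearOrder G] [IsOrderedAddMonoid G]

theorem lt_min_sub_iff_of_add_lt {a b K z : G} (h : a + b < K) :
    a < min z K - b ↔ a + b < z := by
  rw [lt_sub_iff_add_lt, lt_min_iff, and_iff_left h]

theorem setOf_lt_min_sub_and_lt_sub_eq_prod {a η K l M : G} (h_nonneg : 0 ≤ a + η)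
    (h_lt : a + η < K) (hl : 0 ≤ l) :
    {zu : G × G | 0 < zu.1 ∧ zu.2 ∈ Icc 0 M ∧ a < min zu.1 K - η ∧ zu.2 < M - l} =
      Ioi (a + η) ×ˢ Ico 0 (M - l) := by
  ext ⟨z, u⟩
  simp only [mem_ofPred_eq, mem_prod, mem_Ioi, mem_Ico, mem_Icc, lt_min_sub_iff_of_add_lt h_lt]
  constructor
  · rintro ⟨-, ⟨hu_nonneg, -⟩, hz, hu_lt⟩
    exact ⟨hz, hu_nonneg, hu_lt⟩
  · rintro ⟨hz, hu_nonneg, hu_lt⟩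
    exact ⟨h_nonneg.trans_lt hz, ⟨hu_nonneg, hu_lt.le.trans (sub_le_self M hl)⟩, hz, hu_lt⟩

end OrderedGroup

theorem limit_measure_one_jump_general {K θ c m l : ℝ} (M : ℝ) (ν : Measure ℝ)
    (hK : 0 ≤ K) (hθ : 0 ≤ θ) (hcm : m < c) (hl : 0 ≤ l) (hlκ : l < (1 - θ) * K / (c - m)) :
    (ν.prod (volume.restrict (Icc 0 M)))
        {zu : ℝ × ℝ | 0 < zu.1 ∧ zu.2 ∈ Icc 0 M ∧
          l * (c - m) < min zu.1 K - θ * K ∧ zu.2 < M - l} =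
      ν (Ioi (l * (c - m) + θ * K)) * ENNReal.ofReal (M - l) := by
  have hd : 0 < c - m := sub_pos.mpr hcm
  have threshold_nonneg : 0 ≤ l * (c - m) + θ * K := by positivity
  have threshold_lt_buffer : l * (c - m) + θ * K < K := by
    linarith [(lt_div_iff₀ hd).mp hlκ]
  have times_subset : Ico 0 (M - l) ⊆ Icc 0 M :=
    Ico_subset_Icc_self.trans (Icc_subset_Icc_right (sub_le_self M hl))
  rw [setOf_lt_min_sub_and_lt_sub_eq_prod threshold_nonneg threshold_lt_buffer hl,
    Measure.prod_prod, Measure.restrict_eq_self _ times_subset, Real.volume_Ico, sub_zero]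

/-- **The first-level limit measure of long intense periods (continuous part).**
With `ν_α` the measure on `(0,∞)` with `ν_α((x,∞)) = x^{-α}` and `Leb` Lebesgue measure on
`[0,M]`, for `0 < l < κ = (1−θ)K/(c−m)` the one-jump configurations producing an intense
period above `θK` longer than `l` have measure `(M − l)·(l(c−m) + θK)^{-α}`. -/
theorem limit_measure_one_jump (α K θ c m M : ℝ)
    (hα : 0 < α) (hK : 0 < K) (hθ : θ ∈ Ioo (0:ℝ) 1) (hcm : m < c)
    (hM : (1 - θ) * K / (c - m) < M)
    (ν : Measure ℝ) [SigmaFinite ν]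
    (hν : ∀ x : ℝ, 0 < x → ν (Ioi x) = ENNReal.ofReal (x ^ (-α)))
    (hν0 : ν (Iic 0) = 0)
    (l : ℝ) (hl : 0 < l) (hlκ : l < (1 - θ) * K / (c - m)) :
    (ν.prod (volume.restrict (Icc (0:ℝ) M)))
        {zu : ℝ × ℝ | 0 < zu.1 ∧ zu.2 ∈ Icc (0:ℝ) M ∧
          l * (c - m) < min zu.1 K - θ * K ∧ zu.2 < M - l}
      = ENNReal.ofReal ((M - l) * (l * (c - m) + θ * K) ^ (-α)) := by
  have threshold_pos : 0 < l * (c - m) + θ * K :=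
    add_pos (mul_pos hl (sub_pos.mpr hcm)) (mul_pos hθ.1 hK)
  rw [limit_measure_one_jump_general M ν hK.le hθ.1.le hcm hl.le hlκ, hν _ threshold_pos, mul_comm,
    ← ENNReal.ofReal_mul (sub_nonneg.mpr (hlκ.trans hM).le)]

end
end
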